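/- Let G be a group generated by a finite set S and let H_1, H_2 be stable subgroups of G. Then there exists D ≥ 0 such that whenever g_1, g_2 ∈ G and the intersection g_1H_1g_1⁻¹ ∩ g_2H_2g_2⁻¹ is infinite, the D-neighborhoods (with respect to d_S) of the cosets g_1H_1 and g_2H_2 intersect. -/

import Mathlib

/-!
Let `A = g₁H₁` and `B = g₂H₂`, fix `a ∈ A` and let `b` be a point of `B` nearest to `a`. An element
`z` of `g₁H₁g₁⁻¹ ∩ g₂H₂g₂⁻¹` stabilises both cosets, so `z b` is a point of `B` nearest to `z a`.
Follow a geodesic from `a` to `b`, a quasigeodesic inside `B` from `b` to `z b`, and a geodesic from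
`z b` to `z a`. Since both geodesics meet `B` at nearest points, the path is a quasigeodesic as soon
as `z` moves `b` far enough; such a `z` exists because the intersection is infinite. The
quasigeodesic constants depend only on `H₂`. The path has both endpoints in `A` and passes through
`b`, hence stability of `H₁` bounds the distance from `b` to `A`.
-/

open Pointwise

section BasicDefs

variable {G : Type*} [Group G]

/-- The word length of `g` with respect to the generating set `S`
(words use letters from `S ∪ S⁻¹`). -/
noncomputable def wordLength (S : Set G) (g : G) : ℕ :=
  sInf {n : ℕ | ∃ l : List G, l.length = n ∧ (∀ x ∈ l, x ∈ S ∨ x⁻¹ ∈ S) ∧ l.prod = g}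

/-- The word metric on `G` with respect to the generating set `S`. -/
noncomputable def wordDist (S : Set G) (g h : G) : ℝ :=
  (wordLength S (g⁻¹ * h) : ℝ)

/-- The closed `r`-neighborhood of a subset `A` with respect to the word metric `d_S`. -/
def nbhd (S : Set G) (r : ℝ) (A : Set G) : Set G :=
  {g : G | ∃ a ∈ A, wordDist S g a ≤ r}

/-- The distance between two subsets: the infimum of distances between their elements. -/
noncomputable def setDist (S : Set G) (A B : Set G) : ℝ :=
  sInf {r : ℝ | ∃ a ∈ A, ∃ b ∈ B, r = wordDist S a b}

/-- The conjugate subgroup `H^g = g H g⁻¹`. -/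
def conjSub (g : G) (H : Subgroup G) : Subgroup G :=
  H.map (MulAut.conj g).toMonoidHom

end BasicDefs

/-- `γ` restricted to `{0, …, n}` is a `(K, ε)`-quasigeodesic for the distance function `d`. -/
def IsQuasigeodesic {α : Type*} (d : α → α → ℝ) (K ε : ℝ) (n : ℕ) (γ : ℕ → α) : Prop :=
  ∀ i j : ℕ, i ≤ n → j ≤ n →
    (1 / K) * |(i : ℝ) - (j : ℝ)| - ε ≤ d (γ i) (γ j) ∧
      d (γ i) (γ j) ≤ K * |(i : ℝ) - (j : ℝ)| + ε

/-- `γ` restricted to `{0, …, n}` is a geodesic for the distance function `d`. -/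
def IsGeodesic {α : Type*} (d : α → α → ℝ) (n : ℕ) (γ : ℕ → α) : Prop :=
  ∀ i j : ℕ, i ≤ n → j ≤ n → d (γ i) (γ j) = |(i : ℝ) - (j : ℝ)|

/-- The path `γ` (on `{0, …, n}`) is `f`-stable: every `(K, ε)`-quasigeodesic with endpoints
on `γ` stays in the `f K ε`-neighborhood of `γ`. -/
def IsStablePath {α : Type*} (d : α → α → ℝ) (f : ℝ → ℝ → ℝ) (n : ℕ) (γ : ℕ → α) : Prop :=
  ∀ K ε : ℝ, 1 ≤ K → 0 ≤ ε → ∀ (m : ℕ) (η : ℕ → α),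
    IsQuasigeodesic d K ε m η →
    (∃ i ≤ n, η 0 = γ i) → (∃ i ≤ n, η m = γ i) →
    ∀ j ≤ m, ∃ i ≤ n, d (η j) (γ i) ≤ f K ε

/-- The Gromov product `⟨x, y⟩_w` with respect to a distance function `d`. -/
noncomputable def gromovProd {α : Type*} (d : α → α → ℝ) (w x y : α) : ℝ :=
  (d w x + d w y - d x y) / 2

/-- Gromov hyperbolicity of a distance function, via the four-point condition. -/
def IsHyperbolicDist {α : Type*} (d : α → α → ℝ) : Prop :=
  ∃ δ : ℝ, 0 ≤ δ ∧ ∀ w x y z : α,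
    min (gromovProd d w x y) (gromovProd d w y z) - δ ≤ gromovProd d w x z

section GroupDefs

variable {G : Type*} [Group G]

/-- `H` is a stable subgroup of `(G, d_S)` with stability function `f`: `H` has a finite
generating set `T` such that the inclusion `(H, d_T) → (G, d_S)` is a quasi-isometric
embedding sending every `d_T`-geodesic to an `f`-stable quasigeodesic of `(G, d_S)`. -/
def IsStableSubgroupWith (S : Set G) (H : Subgroup G) (f : ℝ → ℝ → ℝ) : Prop :=
  ∃ T : Set H, T.Finite ∧ Subgroup.closure T = ⊤ ∧
    (∃ μ c : ℝ, 1 ≤ μ ∧ 0 ≤ c ∧ ∀ h₁ h₂ : H,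
      (1 / μ) * wordDist T h₁ h₂ - c ≤ wordDist S (h₁ : G) (h₂ : G) ∧
        wordDist S (h₁ : G) (h₂ : G) ≤ μ * wordDist T h₁ h₂ + c) ∧
    ∀ (n : ℕ) (γ : ℕ → H), IsGeodesic (wordDist T) n γ →
      (∃ K ε : ℝ, 1 ≤ K ∧ 0 ≤ ε ∧
        IsQuasigeodesic (wordDist S) K ε n (fun i => (γ i : G))) ∧
      IsStablePath (wordDist S) f n (fun i => (γ i : G))

/-- `H` is a stable subgroup of `(G, d_S)`. -/
def IsStableSubgroup (S : Set G) (H : Subgroup G) : Prop :=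
  ∃ f : ℝ → ℝ → ℝ, IsStableSubgroupWith S H f

/-- The family `Q` of subgroups is hyperbolically embedded in `(G, X)`:
(Q1) geometric separation, (Q2) finite generation, (Q3) uniform quasi-isometric embedding. -/
def IsHypEmbFamily {G : Type*} [Group G] {ι : Type*} (X : Set G) (Q : ι → Subgroup G) : Prop :=
  (∀ ε : ℝ, 0 < ε → ∃ R : ℝ, ∀ (g : G) (i j : ι),
      (∃ a ∈ (Q i : Set G) ∩ nbhd X ε (g • (Q j : Set G)),
        ∃ b ∈ (Q i : Set G) ∩ nbhd X ε (g • (Q j : Set G)), R ≤ wordDist X a b) →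
      i = j ∧ g ∈ Q i) ∧
  ∃ Y : ι → Set G, (∀ i, (Y i).Finite ∧ Y i ⊆ (Q i : Set G) ∧ Subgroup.closure (Y i) = Q i) ∧
    ∃ μ c : ℝ, 1 ≤ μ ∧ 0 ≤ c ∧ ∀ i : ι, ∀ h ∈ Q i,
      (wordLength (Y i) h : ℝ) ≤ μ * (wordLength X h : ℝ) + c

/-- The subset `H` of `G` satisfies the WPD condition in `(G, X)`. -/
def WPDSet (X : Set G) (H : Set G) : Prop :=
  ∀ ε : ℝ, 0 < ε → ∃ N : ℝ, 0 < N ∧ ∀ h₁ h₂ : G, h₁ ∈ H → h₂ ∈ H →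
    N < wordDist X h₁ h₂ →
    {g : G | wordDist X h₁ (g * h₁) < ε ∧ wordDist X h₂ (g * h₂) < ε}.Finite

/-- A quasimorphism on `G`. -/
def IsQuasimorphism (q : G → ℝ) : Prop :=
  ∃ D : ℝ, 0 ≤ D ∧ ∀ x y : G, |q (x * y) - q x - q y| ≤ D

/-- A homogeneous quasimorphism on `G`. -/
def IsHomogeneousQM (q : G → ℝ) : Prop :=
  IsQuasimorphism q ∧ ∀ (x : G) (n : ℕ), q (x ^ n) = (n : ℝ) * q x

/-- `H` is a quasiconvex subgroup of `(G, d_S)`: every geodesic with endpoints in `H`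
lies in a uniformly bounded neighborhood of `H`. -/
def IsQuasiconvex (S : Set G) (H : Subgroup G) : Prop :=
  ∃ C : ℝ, 0 ≤ C ∧ ∀ (n : ℕ) (γ : ℕ → G), IsGeodesic (wordDist S) n γ →
    γ 0 ∈ H → γ n ∈ H → ∀ i ≤ n, ∃ h ∈ H, wordDist S (γ i) h ≤ C

end GroupDefs

section Paths

variable {X : Type*} {d : X → X → ℝ} {K K' ε ε' : ℝ} {n : ℕ} {γ α : ℕ → X}

theorem IsQuasigeodesic.mono (hγ : IsQuasigeodesic d K ε n γ) (hK : 0 < K) (hKK' : K ≤ K')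
    (hεε' : ε ≤ ε') : IsQuasigeodesic d K' ε' n γ := fun i j hi hj => by
  obtain ⟨hlower, hupper⟩ := hγ i j hi hj
  constructor
  · calc 1 / K' * |(i : ℝ) - j| - ε' ≤ 1 / K * |(i : ℝ) - j| - ε := by gcongr
      _ ≤ d (γ i) (γ j) := hlower
  · calc d (γ i) (γ j) ≤ K * |(i : ℝ) - j| + ε := hupper
      _ ≤ K' * |(i : ℝ) - j| + ε' := by gcongr

theorem IsGeodesic.isQuasigeodesic (hγ : IsGeodesic d n γ) : IsQuasigeodesic d 1 0 n γ :=
  fun i j hi hj => by simp [hγ i j hi hj]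

theorem IsGeodesic.dist_first (hγ : IsGeodesic d n γ) {t : ℕ} (ht : t ≤ n) :
    d (γ 0) (γ t) = t := by
  simp [hγ 0 t n.zero_le ht]

theorem IsGeodesic.dist_last (hγ : IsGeodesic d n γ) {t : ℕ} (ht : t ≤ n) :
    d (γ t) (γ n) = n - t := by
  rw [hγ t n ht le_rfl, abs_sub_comm, abs_of_nonneg (sub_nonneg.2 (Nat.cast_le.2 ht))]

theorem IsQuasigeodesic.reverse (hγ : IsQuasigeodesic d K ε n γ) :
    IsQuasigeodesic d K ε n (fun i => γ (n - i)) := fun i j hi hj => by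
  have habs : |((n - i : ℕ) : ℝ) - (n - j : ℕ)| = |(i : ℝ) - j| := by
    rw [Nat.cast_sub hi, Nat.cast_sub hj, sub_sub_sub_cancel_left, abs_sub_comm]
  simpa only [habs] using hγ (n - i) (n - j) (Nat.sub_le n i) (Nat.sub_le n j)

/-- The concatenation of a path `γ` on `{0, …, n}` with a path `α` starting at `γ n`. If
`α 0 ≠ γ n`, the value at `n` is `γ n`. -/
def concatPath (n : ℕ) (γ α : ℕ → X) (i : ℕ) : X :=
  if i ≤ n then γ i else α (i - n)

theorem concatPath_of_le {i : ℕ} (hi : i ≤ n) : concatPath n γ α i = γ i :=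
  if_pos hi

theorem concatPath_add (hα : α 0 = γ n) (t : ℕ) : concatPath n γ α (n + t) = α t := by
  rcases t.eq_zero_or_pos with rfl | ht
  · rw [add_zero, concatPath_of_le le_rfl, hα]
  · rw [concatPath, if_neg (by omega), Nat.add_sub_cancel_left]

end Paths

section PseudoMetric

variable {X : Type*} [PseudoMetricSpace X] {K ε : ℝ} {n L L' : ℕ} {γ α α' : ℕ → X}

theorem isGeodesic_of_dist_succ_le_one (hstep : ∀ i < n, dist (γ i) (γ (i + 1)) ≤ 1)
    (hends : n ≤ dist (γ 0) (γ n)) : IsGeodesic dist n γ := by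
  have hle {i j : ℕ} (hij : i ≤ j) (hj : j ≤ n) : dist (γ i) (γ j) ≤ (j : ℝ) - i := by
    have hsum := dist_le_Ico_sum_of_dist_le (f := γ) (d := fun _ => 1) hij
      fun _ hk => hstep _ (hk.trans_le hj)
    simpa [Nat.cast_sub hij] using hsum
  intro i j hi hj
  wlog hij : i ≤ j generalizing i j
  · rw [dist_comm, abs_sub_comm]
    exact this j i hj hi (le_of_not_ge hij)
  rw [abs_sub_comm, abs_of_nonneg (sub_nonneg.2 (Nat.cast_le.2 hij))]
  refine (hle hij hj).antisymm ?_
  have hfirst := hle i.zero_le hi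
  have hlast := hle hj le_rfl
  have htri := dist_triangle4 (γ 0) (γ i) (γ j) (γ n)
  rw [Nat.cast_zero, sub_zero] at hfirst
  linarith

theorem IsQuasigeodesic.dist_across_corner_bounds {i s t : ℕ}
    (hγ : IsQuasigeodesic dist K ε (i + s) γ) (hK : 1 ≤ K) (hε : 0 ≤ ε)
    (hα : IsGeodesic dist L α) (hαγ : α 0 = γ (i + s)) (hnear : L ≤ dist (γ i) (α L))
    (ht : t ≤ L) :
    1 / (3 * K) * (s + t) - ε ≤ dist (γ i) (α t) ∧ dist (γ i) (α t) ≤ 3 * K * (s + t) + ε := by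
  have hdiff : |(i : ℝ) - (i + s : ℕ)| = s := by
    rw [abs_sub_comm, Nat.cast_add, add_sub_cancel_left, Nat.abs_cast]
  obtain ⟨hlower, hupper⟩ := hγ i (i + s) (Nat.le_add_right i s) le_rfl
  have hcorner := hα.dist_first ht
  rw [hdiff] at hlower hupper
  rw [hαγ] at hcorner
  have htail : t ≤ dist (γ i) (α t) := by
    linarith [dist_triangle (γ i) (α t) (α L), hα.dist_last ht]
  have hhead : 1 / K * s - ε ≤ dist (γ i) (α t) + t := by
    linarith [dist_triangle_right (γ i) (γ (i + s)) (α t)]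
  have htK : 1 / K * t ≤ t :=
    mul_le_of_le_one_left t.cast_nonneg ((div_le_one (by linarith)).2 hK)
  constructor
  · calc 1 / (3 * K) * (s + t) - ε = (1 / K * s + 1 / K * t) / 3 - ε := by ring
      _ ≤ dist (γ i) (α t) := by linarith
  · calc dist (γ i) (α t) ≤ dist (γ i) (γ (i + s)) + dist (γ (i + s)) (α t) :=
          dist_triangle _ _ _
      _ ≤ K * s + ε + t := by linarith
      _ ≤ 3 * K * (s + t) + ε := by
          nlinarith [s.cast_nonneg (α := ℝ), t.cast_nonneg (α := ℝ)]

theorem IsQuasigeodesic.concatPath_of_nearest (hγ : IsQuasigeodesic dist K ε n γ) (hK : 1 ≤ K)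
    (hε : 0 ≤ ε) (hα : IsGeodesic dist L α) (hαγ : α 0 = γ n)
    (hnear : ∀ i ≤ n, L ≤ dist (γ i) (α L)) :
    IsQuasigeodesic dist (3 * K) ε (n + L) (concatPath n γ α) := by
  intro i j hi hj
  wlog hij : i ≤ j generalizing i j
  · rw [dist_comm, abs_sub_comm]
    exact this j i hj hi (le_of_not_ge hij)
  rcases le_total j n with hjn | hnj
  · rw [concatPath_of_le hjn, concatPath_of_le (hij.trans hjn)]
    exact hγ.mono (by linarith) (by linarith) le_rfl i j (hij.trans hjn) hjn
  obtain ⟨t, rfl⟩ := Nat.exists_eq_add_of_le hnj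
  have ht : t ≤ L := by omega
  rcases le_total n i with hni | hin
  · obtain ⟨s, rfl⟩ := Nat.exists_eq_add_of_le hni
    rw [concatPath_add hαγ, concatPath_add hαγ]
    simpa using hα.isQuasigeodesic.mono one_pos (by linarith : 1 ≤ 3 * K) hε s t (by omega) ht
  rw [concatPath_add hαγ, concatPath_of_le hin]
  obtain ⟨s, rfl⟩ := Nat.exists_eq_add_of_le hin
  have hdiff : |(i : ℝ) - (i + s + t : ℕ)| = s + t := by
    rw [abs_sub_comm, add_assoc, Nat.cast_add, add_sub_cancel_left, Nat.abs_cast, Nat.cast_add]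
  rw [hdiff]
  exact hγ.dist_across_corner_bounds hK hε hα hαγ (hnear i hin) ht

theorem IsQuasigeodesic.exists_detour (hγ : IsQuasigeodesic dist K ε n γ) (hK : 1 ≤ K)
    (hε : 0 ≤ ε) (hα : IsGeodesic dist L α) (hαγ : α 0 = γ n)
    (hnear : ∀ i ≤ n, L ≤ dist (γ i) (α L)) (hα' : IsGeodesic dist L' α') (hα'γ : α' 0 = γ 0)
    (hnear' : ∀ i ≤ n, L' ≤ dist (γ i) (α' L')) (hfar : L + 2 * L' ≤ dist (γ 0) (γ n)) :
    ∃ (m : ℕ) (η : ℕ → X), IsQuasigeodesic dist (3 * (3 * K)) ε m η ∧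
      η 0 = α L ∧ η m = α' L' ∧ ∃ j ≤ m, η j = γ n := by
  let β : ℕ → X := fun i => concatPath n γ α (n + L - i)
  have hβ : IsQuasigeodesic dist (3 * K) ε (n + L) β :=
    (hγ.concatPath_of_nearest hK hε hα hαγ hnear).reverse
  have hβ_first : β 0 = α L := concatPath_add hαγ L
  have hβ_last : β (n + L) = γ 0 := by
    simp only [β, Nat.sub_self, concatPath_of_le n.zero_le]
  have hβ_corner : β L = γ n := by
    simp only [β, Nat.add_sub_cancel, concatPath_of_le le_rfl]
  have hα'β : α' 0 = β (n + L) := hα'γ.trans hβ_last.symm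
  have hnearβ : ∀ i ≤ n + L, L' ≤ dist (concatPath n γ α i) (α' L') := by
    intro i hi
    rcases le_total i n with hin | hni
    · rw [concatPath_of_le hin]
      exact hnear' i hin
    · obtain ⟨t, rfl⟩ := Nat.exists_eq_add_of_le hni
      have ht : t ≤ L := by omega
      have hcorner := hα.dist_first ht
      have hcorner' := hα'.dist_first le_rfl
      have htri := dist_triangle4_right (γ 0) (γ n) (α' L') (α t)
      rw [hαγ] at hcorner
      rw [hα'γ] at hcorner'
      rw [concatPath_add hαγ]
      have ht' : (t : ℝ) ≤ L := Nat.cast_le.2 ht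
      linarith [dist_comm (α t) (α' L')]
  exact ⟨n + L + L', concatPath (n + L) β α',
    hβ.concatPath_of_nearest (by linarith) hε hα' hα'β fun i _ => hnearβ _ (Nat.sub_le _ _),
    (concatPath_of_le (Nat.zero_le _)).trans hβ_first, concatPath_add hα'β L',
    L, by omega, (concatPath_of_le (Nat.le_add_left L n)).trans hβ_corner⟩

end PseudoMetric

section WordMetric

variable {G : Type*} [Group G] {S : Set G}

theorem wordLength_prod_le {l : List G} (hl : ∀ x ∈ l, x ∈ S ∨ x⁻¹ ∈ S) :
    wordLength S l.prod ≤ l.length :=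
  Nat.sInf_le ⟨l, rfl, hl, rfl⟩

theorem exists_list_length_eq_wordLength (hS : Subgroup.closure S = ⊤) (g : G) :
    ∃ l : List G, l.length = wordLength S g ∧ (∀ x ∈ l, x ∈ S ∨ x⁻¹ ∈ S) ∧ l.prod = g := by
  have hg : g ∈ Submonoid.closure (S ∪ S⁻¹) := by
    rw [← Subgroup.closure_toSubmonoid, hS]
    trivial
  obtain ⟨l, hl, hprod⟩ := Submonoid.exists_list_of_mem_closure hg
  exact Nat.sInf_mem (s := {n | ∃ l : List G, l.length = n ∧ (∀ x ∈ l, x ∈ S ∨ x⁻¹ ∈ S) ∧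
    l.prod = g}) ⟨l.length, l, rfl, hl, hprod⟩

theorem wordLength_one : wordLength S (1 : G) = 0 :=
  Nat.le_zero.1 (wordLength_prod_le (l := []) (by simp))

theorem wordLength_le_one {x : G} (hx : x ∈ S ∨ x⁻¹ ∈ S) : wordLength S x ≤ 1 := by
  simpa using wordLength_prod_le (l := [x]) (by simpa using hx)

theorem wordLength_inv (g : G) : wordLength S g⁻¹ = wordLength S g := by
  have hinv {g : G} {n : ℕ}
      (h : ∃ l : List G, l.length = n ∧ (∀ x ∈ l, x ∈ S ∨ x⁻¹ ∈ S) ∧ l.prod = g) :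
      ∃ l : List G, l.length = n ∧ (∀ x ∈ l, x ∈ S ∨ x⁻¹ ∈ S) ∧ l.prod = g⁻¹ := by
    obtain ⟨l, rfl, hl, rfl⟩ := h
    refine ⟨(l.map (·⁻¹)).reverse, by simp, fun x hx => ?_, (List.prod_inv_reverse l).symm⟩
    obtain ⟨y, hy, rfl⟩ := List.mem_map.1 (List.mem_reverse.1 hx)
    simpa [or_comm] using hl y hy
  exact congrArg sInf (Set.ext fun n => ⟨fun h => by simpa using hinv h, hinv⟩)

theorem wordLength_mul_le (hS : Subgroup.closure S = ⊤) (g h : G) :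
    wordLength S (g * h) ≤ wordLength S g + wordLength S h := by
  obtain ⟨l, hlen, hl, rfl⟩ := exists_list_length_eq_wordLength hS g
  obtain ⟨m, hlen', hm, rfl⟩ := exists_list_length_eq_wordLength hS h
  rw [← hlen, ← hlen', ← List.prod_append, ← List.length_append]
  exact wordLength_prod_le fun x hx => (List.mem_append.1 hx).elim (hl x) (hm x)

theorem finite_setOf_wordLength_le (hS : Subgroup.closure S = ⊤) (hfin : S.Finite) (n : ℕ) :
    {g : G | wordLength S g ≤ n}.Finite := by
  have : Finite ↥(S ∪ S⁻¹) := (hfin.union hfin.inv).to_subtype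
  refine ((List.finite_length_le ↥(S ∪ S⁻¹) n).image fun l => (l.map (↑)).prod).subset ?_
  intro g hg
  obtain ⟨l, hlen, hl, hprod⟩ := exists_list_length_eq_wordLength hS g
  lift l to List ↥(S ∪ S⁻¹) using hl
  rw [List.length_map] at hlen
  exact ⟨l, hlen.trans_le hg, hprod⟩

theorem wordDist_self (x : G) : wordDist S x x = 0 := by
  simp [wordDist, wordLength_one]

theorem wordDist_comm (x y : G) : wordDist S x y = wordDist S y x := by
  rw [wordDist, wordDist, ← wordLength_inv, mul_inv_rev, inv_inv]

theorem wordDist_triangle (hS : Subgroup.closure S = ⊤) (x y z : G) :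
    wordDist S x z ≤ wordDist S x y + wordDist S y z := by
  have hmul := wordLength_mul_le hS (x⁻¹ * y) (y⁻¹ * z)
  rw [mul_assoc, mul_inv_cancel_left] at hmul
  unfold wordDist
  exact_mod_cast hmul

theorem wordDist_mul_left (g x y : G) : wordDist S (g * x) (g * y) = wordDist S x y := by
  rw [wordDist, wordDist, mul_inv_rev, mul_assoc, inv_mul_cancel_left]

/-- The word metric of a generating set as a Mathlib pseudometric, which makes the results on
paths in pseudometric spaces available for `wordDist S`. -/
noncomputable abbrev wordPseudoMetricSpace (hS : Subgroup.closure S = ⊤) :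
    PseudoMetricSpace G where
  dist := wordDist S
  dist_self := wordDist_self
  dist_comm := wordDist_comm
  dist_triangle := wordDist_triangle hS

theorem exists_isGeodesic_wordDist (hS : Subgroup.closure S = ⊤) (x y : G) :
    ∃ α : ℕ → G, IsGeodesic (wordDist S) (wordLength S (x⁻¹ * y)) α ∧
      α 0 = x ∧ α (wordLength S (x⁻¹ * y)) = y := by
  obtain ⟨l, hlen, hl, hprod⟩ := exists_list_length_eq_wordLength hS (x⁻¹ * y)
  have hlast : x * (l.take (wordLength S (x⁻¹ * y))).prod = y := by
    rw [← hlen, List.take_length, hprod, mul_inv_cancel_left]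
  let _ := wordPseudoMetricSpace hS
  refine ⟨fun i => x * (l.take i).prod, isGeodesic_of_dist_succ_le_one (fun i hi => ?_) ?_,
    by simp, hlast⟩
  · change wordDist S _ _ ≤ 1
    rw [wordDist_mul_left, List.prod_take_succ l i (hlen ▸ hi), wordDist, inv_mul_cancel_left]
    exact_mod_cast wordLength_le_one (hl _ (List.getElem_mem _))
  · change _ ≤ wordDist S _ _
    rw [hlast, List.take_zero, List.prod_nil, mul_one, wordDist]

theorem exists_isQuasigeodesic_detour (hS : Subgroup.closure S = ⊤) {K ε : ℝ} {n : ℕ} {γ : ℕ → G}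
    (hγ : IsQuasigeodesic (wordDist S) K ε n γ) (hK : 1 ≤ K) (hε : 0 ≤ ε) {a a' : G}
    (hnear : ∀ i ≤ n, wordDist S (γ n) a ≤ wordDist S (γ i) a)
    (hnear' : ∀ i ≤ n, wordDist S (γ 0) a' ≤ wordDist S (γ i) a')
    (hfar : wordDist S (γ n) a + 2 * wordDist S (γ 0) a' ≤ wordDist S (γ 0) (γ n)) :
    ∃ (m : ℕ) (η : ℕ → G), IsQuasigeodesic (wordDist S) (3 * (3 * K)) ε m η ∧
      η 0 = a ∧ η m = a' ∧ ∃ j ≤ m, η j = γ n := by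
  obtain ⟨α, hα, hα_first, hα_last⟩ := exists_isGeodesic_wordDist hS (γ n) a
  obtain ⟨α', hα', hα'_first, hα'_last⟩ := exists_isGeodesic_wordDist hS (γ 0) a'
  let _ := wordPseudoMetricSpace hS
  obtain ⟨m, η, hη, hη_first, hη_last, hcorner⟩ := IsQuasigeodesic.exists_detour hγ hK hε
    hα hα_first (by rwa [hα_last]) hα' hα'_first (by rwa [hα'_last]) hfar
  exact ⟨m, η, hη, hη_first.trans hα_last, hη_last.trans hα'_last, hcorner⟩

theorem exists_forall_wordDist_le {B : Set G} (hB : B.Nonempty) (a : G) :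
    ∃ b ∈ B, ∀ b' ∈ B, wordDist S a b ≤ wordDist S a b' := by
  let f (x : G) : ℕ := wordLength S (a⁻¹ * x)
  exact ⟨_, Function.argminOn_mem f B hB, fun b' hb' =>
    Nat.cast_le.2 (Function.argminOn_le f B hb')⟩

theorem mem_nbhd_of_mem {A : Set G} {r : ℝ} {x : G} (hr : 0 ≤ r) (hx : x ∈ A) : x ∈ nbhd S r A :=
  ⟨x, hx, (wordDist_self x).trans_le hr⟩

theorem smul_nbhd (g : G) (r : ℝ) (A : Set G) : g • nbhd S r A = nbhd S r (g • A) := by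
  ext x
  constructor
  · rintro ⟨y, ⟨a, ha, hya⟩, rfl⟩
    exact ⟨g * a, Set.smul_mem_smul_set ha, (wordDist_mul_left g y a).trans_le hya⟩
  · rintro ⟨_, ⟨a, ha, rfl⟩, hxa⟩
    refine Set.mem_smul_set_iff_inv_smul_mem.2 ⟨a, ha, ?_⟩
    rw [← wordDist_mul_left g]
    simpa using hxa

theorem IsQuasigeodesic.mul_left {K ε : ℝ} {n : ℕ} {γ : ℕ → G}
    (hγ : IsQuasigeodesic (wordDist S) K ε n γ) (g : G) :
    IsQuasigeodesic (wordDist S) K ε n (fun i => g * γ i) := fun i j hi hj => by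
  simpa only [wordDist_mul_left] using hγ i j hi hj

end WordMetric

section Subgroups

variable {G : Type*} [Group G] {S : Set G} {H : Subgroup G}

/-- `H` is strongly quasiconvex (also called a Morse subgroup) in `(G, d_S)`: quasigeodesics with
endpoints in `H` stay uniformly close to `H`. Stability of `H₁` is used in this form. -/
def IsStronglyQuasiconvex (S : Set G) (H : Subgroup G) : Prop :=
  ∀ K ε : ℝ, 1 ≤ K → 0 ≤ ε → ∃ C : ℝ, 0 ≤ C ∧
    ∀ (m : ℕ) (η : ℕ → G), IsQuasigeodesic (wordDist S) K ε m η → η 0 ∈ H → η m ∈ H →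
      ∀ j ≤ m, η j ∈ nbhd S C H

/-- `H` is undistorted in `(G, d_S)`: it has a finite generating set whose word metric makes the
inclusion into `(G, d_S)` a quasi-isometric embedding. Stability of `H₂` is used in
this form. -/
def IsUndistorted (S : Set G) (H : Subgroup G) : Prop :=
  ∃ T : Set H, T.Finite ∧ Subgroup.closure T = ⊤ ∧ ∃ μ c : ℝ, 1 ≤ μ ∧ 0 ≤ c ∧ ∀ h₁ h₂ : H,
    (1 / μ) * wordDist T h₁ h₂ - c ≤ wordDist S (h₁ : G) (h₂ : G) ∧
      wordDist S (h₁ : G) (h₂ : G) ≤ μ * wordDist T h₁ h₂ + c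

theorem IsStableSubgroup.isUndistorted (hH : IsStableSubgroup S H) : IsUndistorted S H := by
  obtain ⟨f, T, hfin, hT, hqi, -⟩ := hH
  exact ⟨T, hfin, hT, hqi⟩

theorem IsStableSubgroup.isStronglyQuasiconvex (hH : IsStableSubgroup S H) :
    IsStronglyQuasiconvex S H := by
  obtain ⟨f, T, -, hT, -, hstable⟩ := hH
  refine fun K ε hK hε => ⟨max 0 (f K ε), le_max_left _ _, fun m η hη h_first h_last j hj => ?_⟩
  obtain ⟨γ, hγ, hγ_first, hγ_last⟩ := exists_isGeodesic_wordDist hT ⟨η 0, h_first⟩ ⟨η m, h_last⟩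
  obtain ⟨i, -, hi⟩ := (hstable _ γ hγ).2 K ε hK hε m η hη ⟨0, Nat.zero_le _, by simp [hγ_first]⟩
    ⟨_, le_rfl, by simp [hγ_last]⟩ j hj
  exact ⟨γ i, (γ i).2, hi.trans (le_max_right _ _)⟩

theorem IsStronglyQuasiconvex.exists_forall_mem_nbhd_smul (hH : IsStronglyQuasiconvex S H)
    {K ε : ℝ} (hK : 1 ≤ K) (hε : 0 ≤ ε) :
    ∃ C : ℝ, 0 ≤ C ∧ ∀ (g : G) (m : ℕ) (η : ℕ → G), IsQuasigeodesic (wordDist S) K ε m η →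
      η 0 ∈ g • (H : Set G) → η m ∈ g • (H : Set G) →
        ∀ j ≤ m, η j ∈ nbhd S C (g • (H : Set G)) := by
  obtain ⟨C, hC, hnbhd⟩ := hH K ε hK hε
  refine ⟨C, hC, fun g m η hη h_first h_last j hj => ?_⟩
  rw [mem_leftCoset_iff] at h_first h_last
  rw [← smul_nbhd, mem_leftCoset_iff]
  exact hnbhd m _ (hη.mul_left g⁻¹) h_first h_last j hj

theorem IsUndistorted.exists_isQuasigeodesic (hH : IsUndistorted S H) :
    ∃ K ε : ℝ, 1 ≤ K ∧ 0 ≤ ε ∧ ∀ g : G, ∀ x ∈ g • (H : Set G), ∀ y ∈ g • (H : Set G),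
      ∃ (n : ℕ) (γ : ℕ → G), IsQuasigeodesic (wordDist S) K ε n γ ∧ γ 0 = x ∧ γ n = y ∧
        ∀ i, γ i ∈ g • (H : Set G) := by
  obtain ⟨T, -, hT, μ, c, hμ, hc, hqi⟩ := hH
  refine ⟨μ, c, hμ, hc, ?_⟩
  rintro g _ ⟨u, hu, rfl⟩ _ ⟨v, hv, rfl⟩
  obtain ⟨γ, hγ, hγ_first, hγ_last⟩ := exists_isGeodesic_wordDist hT ⟨u, hu⟩ ⟨v, hv⟩
  have hγG : IsQuasigeodesic (wordDist S) μ c (wordLength T (⟨u, hu⟩⁻¹ * ⟨v, hv⟩))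
      (fun i => (γ i : G)) := fun i j hi hj => by
    simpa only [hγ i j hi hj] using hqi (γ i) (γ j)
  exact ⟨_, _, hγG.mul_left g, by simp [hγ_first], by simp [hγ_last],
    fun i => Set.smul_mem_smul_set (γ i).2⟩

theorem IsUndistorted.finite_setOf_mem_and_wordLength_le (hH : IsUndistorted S H) (r : ℝ) :
    {h : G | h ∈ H ∧ wordLength S h ≤ r}.Finite := by
  obtain ⟨T, hfin, hT, μ, c, hμ, -, hqi⟩ := hH
  refine ((finite_setOf_wordLength_le hT hfin ⌊μ * (r + c)⌋₊).image
    ((↑) : H → G)).subset ?_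
  rintro h ⟨hh, hr⟩
  refine ⟨⟨h, hh⟩, Nat.le_floor ?_, rfl⟩
  have hlower := (hqi 1 ⟨h, hh⟩).1
  simp only [wordDist, inv_one, one_mul, OneMemClass.coe_one] at hlower
  rw [← inv_mul_le_iff₀ (by linarith), ← one_div]
  linarith

theorem inv_mul_mul_mem_of_mem_conjSub {g x z : G} (hz : z ∈ conjSub g H)
    (hx : x ∈ g • (H : Set G)) : x⁻¹ * (z * x) ∈ H := by
  obtain ⟨u, hu, rfl⟩ := hz
  obtain ⟨v, hv, rfl⟩ := hx
  have hconj : (g • v)⁻¹ * (MulAut.conj g u * (g • v)) = v⁻¹ * u * v := by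
    simp only [smul_eq_mul, MulAut.conj_apply]
    group
  exact hconj ▸ H.mul_mem (H.mul_mem (H.inv_mem hv) hu) hv

theorem mul_mem_smul_of_mem_conjSub {g x z : G} (hz : z ∈ conjSub g H)
    (hx : x ∈ g • (H : Set G)) : z * x ∈ g • (H : Set G) := by
  have hmem := H.mul_mem ((mem_leftCoset_iff g).1 hx) (inv_mul_mul_mem_of_mem_conjSub hz hx)
  rw [mul_assoc, mul_inv_cancel_left] at hmem
  exact (mem_leftCoset_iff g).2 hmem

theorem IsUndistorted.exists_lt_wordDist_mul (hH : IsUndistorted S H) {g x : G}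
    (hx : x ∈ g • (H : Set G)) {Z : Set G} (hZ : Z.Infinite) (hZH : Z ⊆ conjSub g H) (r : ℝ) :
    ∃ z ∈ Z, r < wordDist S x (z * x) := by
  by_contra! hle
  have hinj : Function.Injective fun z : G => x⁻¹ * (z * x) :=
    (mul_right_injective x⁻¹).comp (mul_left_injective x)
  exact hZ (((hH.finite_setOf_mem_and_wordLength_le r).preimage hinj.injOn).subset fun z hz =>
    ⟨inv_mul_mul_mem_of_mem_conjSub (hZH hz) hx, hle z hz⟩)

theorem IsUndistorted.exists_isQuasigeodesic_through_nearest (hH : IsUndistorted S H)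
    (hS : Subgroup.closure S = ⊤) :
    ∃ K ε : ℝ, 1 ≤ K ∧ 0 ≤ ε ∧ ∀ g a b z : G, b ∈ g • (H : Set G) → z ∈ conjSub g H →
      (∀ y ∈ g • (H : Set G), wordDist S a b ≤ wordDist S a y) →
      3 * wordDist S a b ≤ wordDist S b (z * b) →
      ∃ (m : ℕ) (η : ℕ → G), IsQuasigeodesic (wordDist S) K ε m η ∧
        η 0 = a ∧ η m = z * a ∧ ∃ j ≤ m, η j = b := by
  obtain ⟨K, ε, hK, hε, hpath⟩ := hH.exists_isQuasigeodesic
  refine ⟨3 * (3 * K), ε, by linarith, hε, fun g a b z hb hz hmin hfar => ?_⟩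
  obtain ⟨n, γ, hγ, hγ_first, rfl, hγH⟩ := hpath g _ (mul_mem_smul_of_mem_conjSub hz hb) b hb
  have hdist : wordDist S (γ 0) (z * a) = wordDist S a (γ n) := by
    rw [hγ_first, wordDist_mul_left, wordDist_comm]
  have hnear (i : ℕ) : wordDist S (γ n) a ≤ wordDist S (γ i) a := by
    rw [wordDist_comm, wordDist_comm (γ i)]
    exact hmin _ (hγH i)
  have hnear' (i : ℕ) : wordDist S (γ 0) (z * a) ≤ wordDist S (γ i) (z * a) := by
    rw [hdist, wordDist_comm (γ i), ← wordDist_mul_left z⁻¹ (z * a), inv_mul_cancel_left]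
    exact hmin _ (mul_mem_smul_of_mem_conjSub (inv_mem hz) (hγH i))
  refine exists_isQuasigeodesic_detour hS hγ hK hε (fun i _ => hnear i) (fun i _ => hnear' i) ?_
  rw [hdist, hγ_first, wordDist_comm (γ n), wordDist_comm (z * γ n)]
  linarith

end Subgroups

theorem close_cosets_of_infinite_conj_inter_general {G : Type*} [Group G] {S : Set G}
    (hS : Subgroup.closure S = ⊤) {H₁ H₂ : Subgroup G} (h₁ : IsStronglyQuasiconvex S H₁)
    (h₂ : IsUndistorted S H₂) :
    ∃ D : ℝ, 0 ≤ D ∧ ∀ g₁ g₂ : G,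
      ((conjSub g₁ H₁ : Set G) ∩ (conjSub g₂ H₂ : Set G)).Infinite →
      (nbhd S D (g₁ • (H₁ : Set G)) ∩ nbhd S D (g₂ • (H₂ : Set G))).Nonempty := by
  obtain ⟨K, ε, hK, hε, hpath⟩ := h₂.exists_isQuasigeodesic_through_nearest hS
  obtain ⟨D, hD, hnbhd⟩ := h₁.exists_forall_mem_nbhd_smul hK hε
  refine ⟨D, hD, fun g₁ g₂ hinf => ?_⟩
  obtain ⟨a, ha⟩ : (g₁ • (H₁ : Set G)).Nonempty := (OneMemClass.coe_nonempty H₁).smul_set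
  obtain ⟨b, hb, hmin⟩ := exists_forall_wordDist_le (S := S)
    ((OneMemClass.coe_nonempty H₂).smul_set (a := g₂)) a
  obtain ⟨z, ⟨hz₁, hz₂⟩, hfar⟩ :=
    h₂.exists_lt_wordDist_mul hb hinf Set.inter_subset_right (3 * wordDist S a b)
  obtain ⟨m, η, hη, rfl, hη_last, j, hj, rfl⟩ := hpath g₂ a b z hb hz₂ hmin hfar.le
  have hη_mem : η m ∈ g₁ • (H₁ : Set G) := hη_last ▸ mul_mem_smul_of_mem_conjSub hz₁ ha
  exact ⟨η j, hnbhd g₁ m η hη ha hη_mem j hj, mem_nbhd_of_mem hD hb⟩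

/-- **Infinite intersections of conjugates force close cosets.** -/
theorem close_cosets_of_infinite_conj_inter {G : Type*} [Group G] (S : Set G)
    (hSfin : S.Finite) (hSgen : Subgroup.closure S = ⊤) (H₁ H₂ : Subgroup G)
    (h₁ : IsStableSubgroup S H₁) (h₂ : IsStableSubgroup S H₂) :
    ∃ D : ℝ, 0 ≤ D ∧ ∀ g₁ g₂ : G,
      ((conjSub g₁ H₁ : Set G) ∩ (conjSub g₂ H₂ : Set G)).Infinite →
      (nbhd S D (g₁ • (H₁ : Set G)) ∩ nbhd S D (g₂ • (H₂ : Set G))).Nonempty :=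
  close_cosets_of_infinite_conj_inter_general hSgen h₁.isStronglyQuasiconvex h₂.isUndistorted
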